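/- Let G = (V, E, τ) be a graph on n vertices with no isolated vertices and with τ(v) ≤ d_v for every v, and let k_c, k_s, ℓ ∈ ℕ with ℓ > k_s ≥ k_c. Let H be the graph constructed from G and ℓ, with X and Y its target sets of size ℓ. Then: (Completeness) if opt(G) ≤ k_c, then opt_H(X ⇝ Y) ≤ k_c + ℓ; and (Soundness) if opt(G) > k_s, then opt_H(X ⇝ Y) > k_s + ℓ. -/

import Mathlib

namespace TSS

variable {V : Type*}

/-- The set of active vertices after `i` steps of the activation process started from `S`. -/
def activeAt (G : SimpleGraph V) (τ : V → ℕ) (S : Set V) : ℕ → Set V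
  | 0 => S
  | i + 1 => activeAt G τ S i ∪ { v | τ v ≤ (G.neighborSet v ∩ activeAt G τ S i).ncard }

/-- The active vertex set `𝒜(S) = ⋃ i, 𝒜ⁱ(S)`. -/
def activeSet (G : SimpleGraph V) (τ : V → ℕ) (S : Set V) : Set V :=
  ⋃ i, activeAt G τ S i

/-- `S` is a target set for `(G, τ)` if it activates every vertex. -/
def IsTargetSet (G : SimpleGraph V) (τ : V → ℕ) (S : Set V) : Prop :=
  activeSet G τ S = Set.univ

/-- Minimum size of a target set. -/
noncomputable def optTS (G : SimpleGraph V) (τ : V → ℕ) : ℕ :=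
  sInf { m | ∃ S : Set V, IsTargetSet G τ S ∧ S.ncard = m }

/-- A reconfiguration sequence `Sfam 0 = X, …, Sfam T = Y` of target sets where
consecutive sets differ in exactly one vertex. -/
structure IsReconfSeq (G : SimpleGraph V) (τ : V → ℕ) (X Y : Set V) (T : ℕ)
    (Sfam : ℕ → Set V) : Prop where
  head : Sfam 0 = X
  last : Sfam T = Y
  target : ∀ t ≤ T, IsTargetSet G τ (Sfam t)
  step : ∀ t < T, (symmDiff (Sfam t) (Sfam (t + 1))).ncard = 1

/-- The size of a reconfiguration sequence: maximum cardinality of any member. -/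
noncomputable def seqSize (T : ℕ) (Sfam : ℕ → Set V) : ℕ :=
  (Finset.range (T + 1)).sup fun t => (Sfam t).ncard

/-- `opt_G(X ⇝ Y)`: minimum size over all reconfiguration sequences from `X` to `Y`. -/
noncomputable def optReconf (G : SimpleGraph V) (τ : V → ℕ) (X Y : Set V) : ℕ :=
  sInf { m | ∃ T Sfam, IsReconfSeq G τ X Y T Sfam ∧ seqSize T Sfam = m }

/-- The four internal vertices of a one-way gadget. -/
inductive GadVert where | t | h | b1 | b2

/-- Index set of the one-way gadgets of the graph `H` built from `G` (with degree
function `d`) and `ℓ`. -/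
inductive GadIdx (V : Type*) (ℓ : ℕ) (d : V → ℕ) where
  | vx (v : V) (i : Fin ℓ)
  | xa (i : Fin ℓ) (v : V) (j : Fin (d v))
  | av (v : V) (j : Fin (d v))
  | vy (v : V) (i : Fin ℓ)
  | yb (i : Fin ℓ) (v : V) (j : Fin (d v))
  | bv (v : V) (j : Fin (d v))

/-- Vertices of the graph `H`: a copy of `V`, the sets `X`, `Y`, `A`, `B`, and the
internal vertices of all one-way gadgets. -/
inductive HVert (V : Type*) (ℓ : ℕ) (d : V → ℕ) where
  | orig (v : V)
  | xx (i : Fin ℓ)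
  | yy (i : Fin ℓ)
  | aa (v : V) (j : Fin (d v))
  | bb (v : V) (j : Fin (d v))
  | gad (D : GadIdx V ℓ d) (w : GadVert)

variable {ℓ : ℕ} {d : V → ℕ}

/-- The tail of a one-way gadget. -/
def gadTail : GadIdx V ℓ d → HVert V ℓ d
  | .vx v _ => .orig v
  | .xa i _ _ => .xx i
  | .av v j => .aa v j
  | .vy v _ => .orig v
  | .yb i _ _ => .yy i
  | .bv v j => .bb v j

/-- The head of a one-way gadget. -/
def gadHead : GadIdx V ℓ d → HVert V ℓ d
  | .vx _ i => .xx i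
  | .xa _ v j => .aa v j
  | .av v _ => .orig v
  | .vy _ i => .yy i
  | .yb _ v j => .bb v j
  | .bv v _ => .orig v

/-- Base edge relation of the graph `H`. -/
def HRel (G : SimpleGraph V) (ℓ : ℕ) (d : V → ℕ) : HVert V ℓ d → HVert V ℓ d → Prop :=
  fun p q =>
    (∃ u v, G.Adj u v ∧ p = .orig u ∧ q = .orig v) ∨
    (∃ D, p = .gad D .t ∧ (q = .gad D .b1 ∨ q = .gad D .b2)) ∨
    (∃ D, p = .gad D .h ∧ (q = .gad D .b1 ∨ q = .gad D .b2)) ∨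
    (∃ D, p = gadTail D ∧ q = .gad D .t) ∨
    (∃ D, p = gadHead D ∧ q = .gad D .h)

/-- The graph `H` constructed from `G` (with degree function `d`) and `ℓ`. -/
def graphH (G : SimpleGraph V) (ℓ : ℕ) (d : V → ℕ) : SimpleGraph (HVert V ℓ d) :=
  SimpleGraph.fromRel (HRel G ℓ d)

/-- The threshold function `τ'` of `H`, where `n` is the number of vertices of `G`. -/
def tauH (τ : V → ℕ) (n ℓ : ℕ) (d : V → ℕ) : HVert V ℓ d → ℕ
  | .orig v => τ v
  | .xx _ => n
  | .yy _ => n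
  | .aa _ _ => ℓ
  | .bb _ _ => ℓ
  | .gad _ .t => 1
  | .gad _ .b1 => 1
  | .gad _ .b2 => 1
  | .gad _ .h => 2

/-- The vertex set `X = {x₁, …, x_ℓ}` of `H`. -/
def XSet (V : Type*) (ℓ : ℕ) (d : V → ℕ) : Set (HVert V ℓ d) := Set.range HVert.xx

/-- The vertex set `Y = {y₁, …, y_ℓ}` of `H`. -/
def YSet (V : Type*) (ℓ : ℕ) (d : V → ℕ) : Set (HVert V ℓ d) := Set.range HVert.yy

/-- The copy of `V` inside `V(H)`. -/
def OrigSet (V : Type*) (ℓ : ℕ) (d : V → ℕ) : Set (HVert V ℓ d) := Set.range HVert.orig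

/-- The vertex set `A = {a_{v,j}}` of `H`. -/
def ASet (V : Type*) (ℓ : ℕ) (d : V → ℕ) : Set (HVert V ℓ d) :=
  { p | ∃ v j, p = HVert.aa v j }

/-- The vertex set `B = {b_{v,j}}` of `H`. -/
def BSet (V : Type*) (ℓ : ℕ) (d : V → ℕ) : Set (HVert V ℓ d) :=
  { p | ∃ v j, p = HVert.bb v j }

end TSS

/-!
In fact `opt_H(X ⇝ Y) = ℓ + min ℓ (opt G)`. For the upper bound, one may pass from `X` to `Y`
through `X ∪ Y`, or through an optimal target set `S` of `G`, visiting `X ∪ S` and `S ∪ Y` on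
the way.

For the lower bound, charge each vertex of `H` to an element of `V ⊕ X ⊕ Y`: `a_{v,j}` and
`b_{v,j}` to `v`, and the internal vertices of a gadget to the element of its tail. Let a target
set of `H` be charged to `S ⊆ V` within `V`, but neither to some `x_i` nor to some `y_j`. If
`W ⊇ S` is closed under activation in `G` and `W ≠ V`, add to the charged elements those of `W`:
the vertices charged to the resulting set are closed under activation in `H`, since an element of
`X` or `Y` outside it still waits for `V - W`, an `a_{v,k}` for `x_i`, and a `b_{v,k}` for `y_j`.
So `S` is a target set of `G`.

Now take the first step of a reconfiguration at which some `x_i` stops being charged. The set just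
before it is charged to all of `X` and, in addition, either to all of `Y` or to a target set of `G`.
-/

namespace TSS

section Activation

variable {U : Type*} {H : SimpleGraph U} {σ : U → ℕ} {S S' C : Set U}

/-- A set of vertices that the activation process does not enlarge. Target sets are the sets
contained in no proper closed set (`isTargetSet_iff`), which makes it possible to work with them
without following the stages of the process. -/
def ActivationClosed (H : SimpleGraph U) (σ : U → ℕ) (C : Set U) : Prop :=
  ∀ v, σ v ≤ (H.neighborSet v ∩ C).ncard → v ∈ C

theorem ActivationClosed.mem_of_subset [Finite U] (hC : ActivationClosed H σ C) {v : U}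
    {T : Set U} (hT : T ⊆ H.neighborSet v) (hTC : T ⊆ C) (hσ : σ v ≤ T.ncard) : v ∈ C :=
  hC v <| hσ.trans <| Set.ncard_le_ncard <| Set.subset_inter hT hTC

theorem activeAt_mono : Monotone (activeAt H σ S) :=
  monotone_nat_of_le_succ fun _ => Set.subset_union_left

theorem subset_activeSet : S ⊆ activeSet H σ S :=
  Set.subset_iUnion (activeAt H σ S) 0

theorem ActivationClosed.activeSet_subset [Finite U] (hC : ActivationClosed H σ C) (hS : S ⊆ C) :
    activeSet H σ S ⊆ C := by
  refine Set.iUnion_subset fun i => ?_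
  induction i with
  | zero => exact hS
  | succ i ih =>
    refine Set.union_subset ih fun v hv => hC v (hv.trans ?_)
    exact Set.ncard_le_ncard (Set.inter_subset_inter_right _ ih)

theorem activationClosed_activeSet [Finite U] : ActivationClosed H σ (activeSet H σ S) := by
  obtain ⟨i, hi⟩ : ∃ i, activeSet H σ S = activeAt H σ S i :=
    ⟨_, WellFoundedGT.iSup_eq_monotonicSequenceLimit ⟨activeAt H σ S, activeAt_mono⟩⟩
  intro v hv
  rw [hi] at hv
  exact Set.mem_iUnion_of_mem (i + 1) (Or.inr hv)

theorem isTargetSet_iff [Finite U] :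
    IsTargetSet H σ S ↔ ∀ C, S ⊆ C → ActivationClosed H σ C → C = Set.univ where
  mp h _ hS hC := Set.univ_subset_iff.1 (h ▸ hC.activeSet_subset hS)
  mpr h := h _ subset_activeSet activationClosed_activeSet

theorem IsTargetSet.mono [Finite U] (h : IsTargetSet H σ S) (hS : S ⊆ S') :
    IsTargetSet H σ S' :=
  isTargetSet_iff.2 fun C hC => isTargetSet_iff.1 h C (hS.trans hC)

theorem isTargetSet_univ : IsTargetSet H σ Set.univ :=
  Set.univ_subset_iff.1 subset_activeSet

theorem IsTargetSet.optTS_le_ncard (h : IsTargetSet H σ S) : optTS H σ ≤ S.ncard :=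
  Nat.sInf_le ⟨S, h, rfl⟩

theorem exists_isTargetSet_ncard_eq_optTS (H : SimpleGraph U) (σ : U → ℕ) :
    ∃ S, IsTargetSet H σ S ∧ S.ncard = optTS H σ :=
  Nat.sInf_mem (s := {m | ∃ S, IsTargetSet H σ S ∧ S.ncard = m}) ⟨_, _, isTargetSet_univ, rfl⟩

end Activation

section Reconfiguration

open Relation

variable {U : Type*} {H : SimpleGraph U} {σ : U → ℕ} {k T : ℕ} {A B C : Set U} {F : ℕ → Set U}

theorem seqSize_le_iff : seqSize T F ≤ k ↔ ∀ t ≤ T, (F t).ncard ≤ k := by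
  simp [seqSize]

/-- A single reconfiguration step between target sets of size at most `k`. Its reflexive
transitive closure is reconfigurability within size `k`, see `optReconf_le_iff`. -/
structure ReconfStep (H : SimpleGraph U) (σ : U → ℕ) (k : ℕ) (A B : Set U) : Prop where
  left_target : IsTargetSet H σ A
  right_target : IsTargetSet H σ B
  left_ncard_le : A.ncard ≤ k
  right_ncard_le : B.ncard ≤ k
  ncard_symmDiff : (symmDiff A B).ncard = 1

instance : Std.Symm (ReconfStep H σ k) where
  symm A B h := ⟨h.right_target, h.left_target, h.right_ncard_le, h.left_ncard_le,
    symmDiff_comm A B ▸ h.ncard_symmDiff⟩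

theorem IsTargetSet.reflTransGen_of_subset [Finite U] (hA : IsTargetSet H σ A) (hAB : A ⊆ B)
    (hk : B.ncard ≤ k) : ReflTransGen (ReconfStep H σ k) A B := by
  rw [← Set.union_sdiff_cancel hAB]
  refine Set.Finite.induction_on_subset (B \ A) (Set.toFinite _) (by simpa using .refl) ?_
  intro x D hx hD hxD hreach
  have hDB : A ∪ D ⊆ B := Set.union_subset hAB (hD.trans Set.sdiff_subset)
  have hxDB : A ∪ insert x D ⊆ B := by
    rw [Set.union_insert]
    exact Set.insert_subset hx.1 hDB
  have hsymm : symmDiff (A ∪ D) (A ∪ insert x D) = {x} := by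
    ext y
    simp only [Set.mem_symmDiff, Set.mem_union, Set.mem_insert_iff, Set.mem_singleton_iff]
    grind
  exact hreach.tail ⟨hA.mono Set.subset_union_left, hA.mono Set.subset_union_left,
    (Set.ncard_le_ncard hDB).trans hk, (Set.ncard_le_ncard hxDB).trans hk,
    Set.ncard_eq_one.2 ⟨x, hsymm⟩⟩

theorem exists_isReconfSeq_of_reflTransGen (hA : IsTargetSet H σ A) (hk : A.ncard ≤ k)
    (h : ReflTransGen (ReconfStep H σ k) A B) :
    ∃ T F, IsReconfSeq H σ A B T F ∧ seqSize T F ≤ k := by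
  simp only [seqSize_le_iff]
  induction h with
  | refl => exact ⟨0, fun _ => A, ⟨rfl, rfl, fun _ _ => hA, nofun⟩, fun _ _ => hk⟩
  | @tail B C _ hBC ih =>
    obtain ⟨T, F, hF, hFk⟩ := ih
    refine ⟨T + 1, fun t => if t ≤ T then F t else C, ⟨?_, ?_, ?_, ?_⟩, ?_⟩
    · simpa using hF.head
    · simp
    · intro t _
      split_ifs with h
      exacts [hF.target t h, hBC.right_target]
    · intro t ht
      obtain ht | rfl := Nat.lt_succ_iff_lt_or_eq.1 ht
      · simpa [ht.le, Nat.succ_le_of_lt ht] using hF.step t ht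
      · simpa [hF.last] using hBC.ncard_symmDiff
    · intro t _
      dsimp only
      split_ifs with h
      exacts [hFk t h, hBC.right_ncard_le]

theorem IsReconfSeq.reflTransGen (hF : IsReconfSeq H σ A B T F) (hk : seqSize T F ≤ k) :
    ReflTransGen (ReconfStep H σ k) A B := by
  rw [seqSize_le_iff] at hk
  rw [← hF.head, ← hF.last]
  refine ReflTransGen.lift F (fun _ _ h => h) _ _ <|
    reflTransGen_of_succ_of_le (fun i j => ReconfStep H σ k (F i) (F j)) (fun t ht => ?_) T.zero_le
  obtain ⟨-, ht⟩ := Set.mem_Ico.1 ht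
  exact ⟨hF.target t ht.le, hF.target _ ht, hk t ht.le, hk _ ht, hF.step t ht⟩

theorem IsTargetSet.reflTransGen_ncard_union [Finite U] (hA : IsTargetSet H σ A)
    (hB : IsTargetSet H σ B) : ReflTransGen (ReconfStep H σ (A ∪ B).ncard) A B :=
  (hA.reflTransGen_of_subset Set.subset_union_left le_rfl).trans <|
    symm <| hB.reflTransGen_of_subset Set.subset_union_right le_rfl

theorem optReconf_le_iff [Finite U] (hA : IsTargetSet H σ A) (hB : IsTargetSet H σ B) :
    optReconf H σ A B ≤ k ↔ A.ncard ≤ k ∧ ReflTransGen (ReconfStep H σ k) A B := by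
  refine ⟨fun hk => ?_, fun ⟨hAk, h⟩ => ?_⟩
  · obtain ⟨T₀, F₀, hF₀, -⟩ := exists_isReconfSeq_of_reflTransGen hA
      (Set.ncard_le_ncard Set.subset_union_left) (hA.reflTransGen_ncard_union hB)
    obtain ⟨T, F, hF, hsize⟩ := Nat.sInf_mem
      (s := {m | ∃ T F, IsReconfSeq H σ A B T F ∧ seqSize T F = m}) ⟨_, T₀, F₀, hF₀, rfl⟩
    have hFk : seqSize T F ≤ k := hsize.trans_le hk
    exact ⟨hF.head ▸ seqSize_le_iff.1 hFk 0 T.zero_le, hF.reflTransGen hFk⟩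
  · obtain ⟨T, F, hF, hFk⟩ := exists_isReconfSeq_of_reflTransGen hA hAk h
    exact le_trans (Nat.sInf_le ⟨T, F, hF, rfl⟩) hFk

theorem optReconf_le_ncard_union [Finite U] (hA : IsTargetSet H σ A) (hB : IsTargetSet H σ B) :
    optReconf H σ A B ≤ (A ∪ B).ncard :=
  (optReconf_le_iff hA hB).2
    ⟨Set.ncard_le_ncard Set.subset_union_left, hA.reflTransGen_ncard_union hB⟩

theorem optReconf_le_max [Finite U] (hA : IsTargetSet H σ A) (hB : IsTargetSet H σ B)
    (hC : IsTargetSet H σ C) :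
    optReconf H σ A C ≤ max (optReconf H σ A B) (optReconf H σ B C) := by
  obtain ⟨hAk, hAB⟩ := (optReconf_le_iff hA hB).1 (le_max_left _ (optReconf H σ B C))
  obtain ⟨-, hBC⟩ := (optReconf_le_iff hB hC).1 (le_max_right (optReconf H σ A B) _)
  exact (optReconf_le_iff hA hC).2 ⟨hAk, hAB.trans hBC⟩

theorem exists_step_of_reflTransGen {α : Type*} {r : α → α → Prop} {P : α → Prop} {a b : α}
    (h : ReflTransGen r a b) (ha : P a) (hb : ¬ P b) : ∃ c d, r c d ∧ P c ∧ ¬ P d := by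
  induction h with
  | refl => exact absurd ha hb
  | @tail c d _ hcd ih =>
    by_cases hc : P c
    exacts [⟨c, d, hcd, hc, hb⟩, ih hc]

theorem subset_or_superset_of_ncard_symmDiff_eq_one (h : (symmDiff A B).ncard = 1) :
    A ⊆ B ∨ B ⊆ A := by
  obtain ⟨u, hu⟩ := Set.ncard_eq_one.1 h
  have eq_of_mem {v : U} (hv : v ∈ symmDiff A B) : v = u := by rwa [hu] at hv
  by_cases huA : u ∈ A
  · exact .inr fun v hvB => by_contra fun hvA => hvA (eq_of_mem (.inr ⟨hvB, hvA⟩) ▸ huA)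
  · exact .inl fun v hvA => by_contra fun hvB => huA (eq_of_mem (.inl ⟨hvA, hvB⟩) ▸ hvA)

end Reconfiguration

section Construction

variable {V : Type*} {G : SimpleGraph V} {τ : V → ℕ} {ℓ n : ℕ} {d : V → ℕ} {p q : HVert V ℓ d}

instance : Finite GadVert :=
  Set.finite_univ_iff.1 <| (Set.toFinite {.t, .h, .b1, .b2}).subset fun w _ => by cases w <;> simp

instance [Finite V] : Finite (GadIdx V ℓ d) :=
  .of_surjective
    (Sum.elim (fun p : V × Fin ℓ => .vx p.1 p.2) <|
      Sum.elim (fun p : Fin ℓ × Σ v, Fin (d v) => .xa p.1 p.2.1 p.2.2) <|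
      Sum.elim (fun p : Σ v, Fin (d v) => .av p.1 p.2) <|
      Sum.elim (fun p : V × Fin ℓ => .vy p.1 p.2) <|
      Sum.elim (fun p : Fin ℓ × Σ v, Fin (d v) => .yb p.1 p.2.1 p.2.2)
        (fun p : Σ v, Fin (d v) => .bv p.1 p.2))
    (by rintro (_ | _ | _ | _ | _ | _) <;> simp)

instance [Finite V] : Finite (HVert V ℓ d) :=
  .of_surjective
    (Sum.elim .orig <| Sum.elim .xx <| Sum.elim .yy <|
      Sum.elim (fun p : Σ v, Fin (d v) => .aa p.1 p.2) <|
      Sum.elim (fun p : Σ v, Fin (d v) => .bb p.1 p.2)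
        (fun p : GadIdx V ℓ d × GadVert => .gad p.1 p.2))
    (by rintro (_ | _ | _ | _ | _ | _) <;> simp)

theorem graphH_adj_of_hRel (h : HRel G ℓ d p q) (hpq : p ≠ q) : (graphH G ℓ d).Adj p q :=
  ⟨hpq, .inl h⟩

theorem graphH_adj_orig {u v : V} (h : G.Adj u v) : (graphH G ℓ d).Adj (.orig u) (.orig v) :=
  graphH_adj_of_hRel (.inl ⟨u, v, h, rfl, rfl⟩) (by simpa using h.ne)

theorem graphH_adj_gadTail (D : GadIdx V ℓ d) : (graphH G ℓ d).Adj (gadTail D) (.gad D .t) :=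
  graphH_adj_of_hRel (by simp [HRel]) (by cases D <;> nofun)

theorem graphH_adj_gadHead (D : GadIdx V ℓ d) : (graphH G ℓ d).Adj (gadHead D) (.gad D .h) :=
  graphH_adj_of_hRel (by simp [HRel]) (by cases D <;> nofun)

theorem graphH_adj_t_b1 (D : GadIdx V ℓ d) : (graphH G ℓ d).Adj (.gad D .t) (.gad D .b1) :=
  graphH_adj_of_hRel (by simp [HRel]) nofun

theorem graphH_adj_t_b2 (D : GadIdx V ℓ d) : (graphH G ℓ d).Adj (.gad D .t) (.gad D .b2) :=
  graphH_adj_of_hRel (by simp [HRel]) nofun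

theorem graphH_adj_h_b1 (D : GadIdx V ℓ d) : (graphH G ℓ d).Adj (.gad D .h) (.gad D .b1) :=
  graphH_adj_of_hRel (by simp [HRel]) nofun

theorem graphH_adj_h_b2 (D : GadIdx V ℓ d) : (graphH G ℓ d).Adj (.gad D .h) (.gad D .b2) :=
  graphH_adj_of_hRel (by simp [HRel]) nofun

section ClosedSets

variable [Finite V] {C : Set (HVert V ℓ d)}

theorem ActivationClosed.gad_mem (hC : ActivationClosed (graphH G ℓ d) (tauH τ n ℓ d) C)
    {D : GadIdx V ℓ d} (hD : gadTail D ∈ C) (w : GadVert) : .gad D w ∈ C := by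
  have ht : .gad D .t ∈ C := hC.mem_of_subset (T := {gadTail D})
    (by simpa using (graphH_adj_gadTail D).symm) (by simpa using hD) (by simp [tauH])
  have hb1 : .gad D .b1 ∈ C := hC.mem_of_subset (T := {.gad D .t})
    (by simpa using (graphH_adj_t_b1 D).symm) (by simpa using ht) (by simp [tauH])
  have hb2 : .gad D .b2 ∈ C := hC.mem_of_subset (T := {.gad D .t})
    (by simpa using (graphH_adj_t_b2 D).symm) (by simpa using ht) (by simp [tauH])
  have hh : .gad D .h ∈ C := hC.mem_of_subset (T := {.gad D .b1, .gad D .b2})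
    (Set.pair_subset (graphH_adj_h_b1 D) (graphH_adj_h_b2 D)) (Set.pair_subset hb1 hb2)
    (by simp [tauH])
  cases w <;> assumption

theorem ActivationClosed.mem_of_gadTail_mem
    (hC : ActivationClosed (graphH G ℓ d) (tauH τ n ℓ d) C) {ι : Type*}
    {D : ι → GadIdx V ℓ d} (hD : Function.Injective D) (hhead : ∀ i, gadHead (D i) = p)
    (htail : ∀ i, gadTail (D i) ∈ C) (hp : tauH τ n ℓ d p ≤ Nat.card ι) : p ∈ C := by
  refine hC.mem_of_subset (T := Set.range fun i => .gad (D i) .h) ?_ ?_ ?_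
  · rintro _ ⟨i, rfl⟩
    exact hhead i ▸ graphH_adj_gadHead (D i)
  · rintro _ ⟨i, rfl⟩
    exact hC.gad_mem (htail i) _
  · rwa [Set.ncard_range_of_injective fun i j hij => hD (HVert.gad.inj hij).1]

theorem ActivationClosed.xx_mem (hC : ActivationClosed (graphH G ℓ d) (tauH τ n ℓ d) C)
    (hn : n ≤ Nat.card V) (h : ∀ v, .orig v ∈ C) (i : Fin ℓ) : .xx i ∈ C :=
  hC.mem_of_gadTail_mem (D := fun v => .vx v i) (fun _ _ => by simp) (fun _ => rfl) h hn

theorem ActivationClosed.yy_mem (hC : ActivationClosed (graphH G ℓ d) (tauH τ n ℓ d) C)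
    (hn : n ≤ Nat.card V) (h : ∀ v, .orig v ∈ C) (i : Fin ℓ) : .yy i ∈ C :=
  hC.mem_of_gadTail_mem (D := fun v => .vy v i) (fun _ _ => by simp) (fun _ => rfl) h hn

theorem ActivationClosed.aa_mem (hC : ActivationClosed (graphH G ℓ d) (tauH τ n ℓ d) C)
    (h : ∀ i, .xx i ∈ C) (v : V) (j : Fin (d v)) : .aa v j ∈ C :=
  hC.mem_of_gadTail_mem (D := fun i => .xa i v j) (fun _ _ => by simp) (fun _ => rfl) h
    (by simp [tauH])

theorem ActivationClosed.bb_mem (hC : ActivationClosed (graphH G ℓ d) (tauH τ n ℓ d) C)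
    (h : ∀ i, .yy i ∈ C) (v : V) (j : Fin (d v)) : .bb v j ∈ C :=
  hC.mem_of_gadTail_mem (D := fun i => .yb i v j) (fun _ _ => by simp) (fun _ => rfl) h
    (by simp [tauH])

theorem ActivationClosed.orig_mem_of_aa_mem
    (hC : ActivationClosed (graphH G ℓ d) (tauH τ n ℓ d) C) {v : V} (hv : τ v ≤ d v)
    (h : ∀ j, .aa v j ∈ C) : .orig v ∈ C :=
  hC.mem_of_gadTail_mem (D := .av v) (fun _ _ => by simp) (fun _ => rfl) h (by simpa [tauH])

theorem ActivationClosed.orig_mem_of_bb_mem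
    (hC : ActivationClosed (graphH G ℓ d) (tauH τ n ℓ d) C) {v : V} (hv : τ v ≤ d v)
    (h : ∀ j, .bb v j ∈ C) : .orig v ∈ C :=
  hC.mem_of_gadTail_mem (D := .bv v) (fun _ _ => by simp) (fun _ => rfl) h (by simpa [tauH])

theorem ActivationClosed.preimage_orig (hC : ActivationClosed (graphH G ℓ d) (tauH τ n ℓ d) C) :
    ActivationClosed G τ (HVert.orig ⁻¹' C) := by
  intro v hv
  refine hC.mem_of_subset (T := HVert.orig '' (G.neighborSet v ∩ HVert.orig ⁻¹' C)) ?_ ?_ ?_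
  · rintro _ ⟨u, ⟨hu, -⟩, rfl⟩
    exact graphH_adj_orig hu
  · rintro _ ⟨u, ⟨-, hu⟩, rfl⟩
    exact hu
  · rwa [Set.ncard_image_of_injective _ fun _ _ => HVert.orig.inj]

theorem ActivationClosed.eq_univ_of_orig_mem
    (hC : ActivationClosed (graphH G ℓ d) (tauH τ n ℓ d) C) (hn : n ≤ Nat.card V)
    (h : ∀ v, .orig v ∈ C) : C = Set.univ := by
  have hx := hC.xx_mem hn h
  have hy := hC.yy_mem hn h
  have ha := hC.aa_mem hx
  have hb := hC.bb_mem hy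
  have htail (D : GadIdx V ℓ d) : gadTail D ∈ C := by
    rcases D with _ | _ | _ | _ | _ | _
    exacts [h _, hx _, ha _ _, h _, hy _, hb _ _]
  refine Set.eq_univ_of_forall ?_
  rintro (_ | _ | _ | _ | _ | ⟨D, w⟩)
  exacts [h _, hx _, hy _, ha _ _, hb _ _, hC.gad_mem (htail D) w]

end ClosedSets

section UpperBound

theorem ncard_XSet : (XSet V ℓ d).ncard = ℓ := by
  rw [XSet, Set.ncard_range_of_injective fun _ _ => HVert.xx.inj, Nat.card_fin]

theorem ncard_YSet : (YSet V ℓ d).ncard = ℓ := by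
  rw [YSet, Set.ncard_range_of_injective fun _ _ => HVert.yy.inj, Nat.card_fin]

variable [Finite V]

theorem isTargetSet_XSet (hn : n ≤ Nat.card V) (hτ : ∀ v, τ v ≤ d v) :
    IsTargetSet (graphH G ℓ d) (tauH τ n ℓ d) (XSet V ℓ d) :=
  isTargetSet_iff.2 fun _ hX hC => hC.eq_univ_of_orig_mem hn fun v =>
    hC.orig_mem_of_aa_mem (hτ v) (hC.aa_mem (fun i => hX ⟨i, rfl⟩) v)

theorem isTargetSet_YSet (hn : n ≤ Nat.card V) (hτ : ∀ v, τ v ≤ d v) :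
    IsTargetSet (graphH G ℓ d) (tauH τ n ℓ d) (YSet V ℓ d) :=
  isTargetSet_iff.2 fun _ hY hC => hC.eq_univ_of_orig_mem hn fun v =>
    hC.orig_mem_of_bb_mem (hτ v) (hC.bb_mem (fun i => hY ⟨i, rfl⟩) v)

theorem IsTargetSet.image_orig {S : Set V} (hS : IsTargetSet G τ S) (hn : n ≤ Nat.card V) :
    IsTargetSet (graphH G ℓ d) (tauH τ n ℓ d) (HVert.orig '' S) :=
  isTargetSet_iff.2 fun _ hSC hC => hC.eq_univ_of_orig_mem hn <| Set.eq_univ_iff_forall.1 <|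
    isTargetSet_iff.1 hS _ (Set.image_subset_iff.1 hSC) hC.preimage_orig

theorem optReconf_graphH_le (hn : n ≤ Nat.card V) (hτ : ∀ v, τ v ≤ d v) :
    optReconf (graphH G ℓ d) (tauH τ n ℓ d) (XSet V ℓ d) (YSet V ℓ d) ≤
      ℓ + min ℓ (optTS G τ) := by
  have hX := isTargetSet_XSet (G := G) (ℓ := ℓ) hn hτ
  have hY := isTargetSet_YSet (G := G) (ℓ := ℓ) hn hτ
  rw [← min_add_add_left, le_min_iff]
  constructor
  · calc _ ≤ (XSet V ℓ d ∪ YSet V ℓ d).ncard := optReconf_le_ncard_union hX hY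
      _ ≤ (XSet V ℓ d).ncard + (YSet V ℓ d).ncard := Set.ncard_union_le _ _
      _ = ℓ + ℓ := by rw [ncard_XSet, ncard_YSet]
  · obtain ⟨S, hS, hScard⟩ := exists_isTargetSet_ncard_eq_optTS G τ
    have hO : IsTargetSet (graphH G ℓ d) (tauH τ n ℓ d) (HVert.orig '' S) := hS.image_orig hn
    have hOcard : (HVert.orig '' S : Set (HVert V ℓ d)).ncard = optTS G τ := by
      rw [Set.ncard_image_of_injective _ fun _ _ => HVert.orig.inj, hScard]
    refine (optReconf_le_max hX hO hY).trans (max_le ?_ ?_)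
    · calc _ ≤ (XSet V ℓ d ∪ HVert.orig '' S).ncard := optReconf_le_ncard_union hX hO
        _ ≤ (XSet V ℓ d).ncard + (HVert.orig '' S).ncard := Set.ncard_union_le _ _
        _ = ℓ + optTS G τ := by rw [ncard_XSet, hOcard]
    · calc _ ≤ (HVert.orig '' S ∪ YSet V ℓ d).ncard := optReconf_le_ncard_union hO hY
        _ ≤ (HVert.orig '' S).ncard + (YSet V ℓ d).ncard := Set.ncard_union_le _ _
        _ = ℓ + optTS G τ := by rw [ncard_YSet, hOcard, add_comm]

end UpperBound

section LowerBound

/-- The element of `V ⊕ X ⊕ Y` to which a vertex of `H` is charged in the lower bound, the sets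
`X` and `Y` being represented by their index set `Fin ℓ`. Gadget vertices are charged like the
tail of their gadget. -/
def owner : HVert V ℓ d → V ⊕ Fin ℓ ⊕ Fin ℓ
  | .orig v | .aa v _ | .bb v _ => .inl v
  | .xx i | .gad (.xa i _ _) _ => .inr (.inl i)
  | .yy i | .gad (.yb i _ _) _ => .inr (.inr i)
  | .gad (.vx v _) _ | .gad (.av v _) _ | .gad (.vy v _) _ | .gad (.bv v _) _ => .inl v

/-- The vertices of `G` to which some element of `S` is charged. -/
def origShadow (S : Set (HVert V ℓ d)) : Set V := {v | ∃ p ∈ S, owner p = .inl v}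

/-- The indices `i` such that some element of `S` is charged to `x_i`. -/
def xShadow (S : Set (HVert V ℓ d)) : Set (Fin ℓ) :=
  {i | ∃ p ∈ S, owner p = .inr (.inl i)}

/-- The indices `i` such that some element of `S` is charged to `y_i`. -/
def yShadow (S : Set (HVert V ℓ d)) : Set (Fin ℓ) :=
  {i | ∃ p ∈ S, owner p = .inr (.inr i)}

theorem owner_gad (D : GadIdx V ℓ d) (w : GadVert) : owner (.gad D w) = owner (gadTail D) := by
  cases D <;> rfl

theorem owner_eq_or_of_hRel (h : HRel G ℓ d p q) :
    owner p = owner q ∨ (∃ u v, G.Adj u v ∧ p = .orig u ∧ q = .orig v) ∨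
      ∃ D, p = gadHead D ∧ q = .gad D .h := by
  rcases h with h | ⟨D, rfl, rfl | rfl⟩ | ⟨D, rfl, rfl | rfl⟩ | ⟨D, rfl, rfl⟩ | h
  exacts [.inr (.inl h), .inl (by simp only [owner_gad]), .inl (by simp only [owner_gad]),
    .inl (by simp only [owner_gad]), .inl (by simp only [owner_gad]), .inl (owner_gad D _).symm,
    .inr (.inr h)]

theorem owner_eq_or_of_adj (h : (graphH G ℓ d).Adj p q) :
    owner p = owner q ∨ (∃ u v, G.Adj u v ∧ p = .orig u ∧ q = .orig v) ∨
      (∃ D, p = gadHead D ∧ q = .gad D .h) ∨ ∃ D, q = gadHead D ∧ p = .gad D .h := by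
  rcases h with ⟨-, h | h⟩ <;>
    rcases owner_eq_or_of_hRel h with h | ⟨u, v, huv, rfl, rfl⟩ | h
  exacts [.inl h, .inr (.inl ⟨u, v, huv, rfl, rfl⟩), .inr (.inr (.inl h)), .inl h.symm,
    .inr (.inl ⟨v, u, huv.symm, rfl, rfl⟩), .inr (.inr (.inr h))]

theorem origShadow_mono : Monotone (origShadow (V := V) (ℓ := ℓ) (d := d)) :=
  fun _ _ h _ ⟨p, hp, hpv⟩ => ⟨p, h hp, hpv⟩

theorem xShadow_mono : Monotone (xShadow (V := V) (ℓ := ℓ) (d := d)) :=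
  fun _ _ h _ ⟨p, hp, hpi⟩ => ⟨p, h hp, hpi⟩

theorem yShadow_mono : Monotone (yShadow (V := V) (ℓ := ℓ) (d := d)) :=
  fun _ _ h _ ⟨p, hp, hpi⟩ => ⟨p, h hp, hpi⟩

theorem xShadow_XSet : xShadow (XSet V ℓ d) = Set.univ :=
  Set.eq_univ_of_forall fun i => ⟨.xx i, ⟨i, rfl⟩, rfl⟩

theorem xShadow_YSet : xShadow (YSet V ℓ d) = ∅ := by
  simp [xShadow, YSet, owner]

variable {K : Set (V ⊕ Fin ℓ ⊕ Fin ℓ)}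

theorem ncard_neighborSet_inter_lt_of_gadHead {ι : Type*} [Finite ι] (horig : ∀ v, p ≠ .orig v)
    (hgad : ∀ D w, p ≠ .gad D w) (hp : owner p ∉ K) {D : ι → GadIdx V ℓ d}
    (hD : ∀ E, gadHead E = p → ∃ i, D i = E) {i : ι} (hi : owner (gadTail (D i)) ∉ K) :
    ((graphH G ℓ d).neighborSet p ∩ owner ⁻¹' K).ncard < Nat.card ι := by
  have hsub : (graphH G ℓ d).neighborSet p ∩ owner ⁻¹' K ⊆ (fun i => .gad (D i) .h) '' {i}ᶜ := by
    rintro q ⟨hadj, hqK : owner q ∈ K⟩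
    obtain h | ⟨u, v, -, h, -⟩ | ⟨E, rfl, rfl⟩ | ⟨E, -, h⟩ := owner_eq_or_of_adj hadj
    · exact absurd (h ▸ hqK) hp
    · exact absurd h (horig u)
    · obtain ⟨j, rfl⟩ := hD E rfl
      refine ⟨j, ?_, rfl⟩
      rintro rfl
      exact hi (owner_gad (D j) .h ▸ hqK)
    · exact absurd h (hgad E .h)
  calc _ ≤ ((fun i => .gad (D i) .h) '' {i}ᶜ : Set (HVert V ℓ d)).ncard := Set.ncard_le_ncard hsub
    _ ≤ ({i}ᶜ : Set ι).ncard := Set.ncard_image_le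
    _ < Nat.card ι := Set.ncard_lt_card (by simp)

variable [Finite V]

theorem ncard_neighborSet_orig_inter_le {v : V} (hv : .inl v ∉ K) :
    ((graphH G ℓ d).neighborSet (.orig v) ∩ owner ⁻¹' K).ncard ≤
      (G.neighborSet v ∩ Sum.inl ⁻¹' K).ncard := by
  refine (Set.ncard_le_ncard ?_).trans (Set.ncard_image_le (f := HVert.orig))
  rintro q ⟨hadj, hqK : owner q ∈ K⟩
  obtain h | ⟨u, w, huw, h, rfl⟩ | ⟨D, hD, rfl⟩ | ⟨D, rfl, h⟩ := owner_eq_or_of_adj hadj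
  · exact absurd (show owner (.orig v) ∈ K from h ▸ hqK) hv
  · cases h
    exact ⟨w, ⟨huw, hqK⟩, rfl⟩
  · have hvD : owner (.gad D .h) = .inl v := by cases D <;> cases hD <;> rfl
    exact absurd (hvD ▸ hqK) hv
  · cases h

theorem ncard_neighborSet_gad_inter_lt {D : GadIdx V ℓ d} {w : GadVert}
    (hD : owner (.gad D w) ∉ K) :
    ((graphH G ℓ d).neighborSet (.gad D w) ∩ owner ⁻¹' K).ncard < tauH τ n ℓ d (.gad D w) := by
  have hsub : (graphH G ℓ d).neighborSet (.gad D w) ∩ owner ⁻¹' K ⊆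
      {q | w = .h ∧ q = gadHead D} := by
    rintro q ⟨hadj, hqK : owner q ∈ K⟩
    obtain h | ⟨u, v, -, h, -⟩ | ⟨E, h, rfl⟩ | ⟨E, rfl, h⟩ := owner_eq_or_of_adj hadj
    · exact absurd (h ▸ hqK) hD
    · cases h
    · cases E <;> cases h
    · cases h
      exact ⟨rfl, rfl⟩
  refine (Set.ncard_le_ncard hsub).trans_lt ?_
  cases w <;> simp [tauH]

theorem activationClosed_preimage_owner (hn : Nat.card V ≤ n)
    (hG : ActivationClosed G τ (Sum.inl ⁻¹' K)) {v : V} (hv : .inl v ∉ K)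
    {i : Fin ℓ} (hi : .inr (.inl i) ∉ K) {j : Fin ℓ} (hj : .inr (.inr j) ∉ K) :
    ActivationClosed (graphH G ℓ d) (tauH τ n ℓ d) (owner ⁻¹' K) := by
  intro p hle
  by_contra hp
  rw [Set.mem_preimage] at hp
  revert hle
  rcases p with u | a | a | ⟨u, a⟩ | ⟨u, a⟩ | ⟨D, w⟩
  · exact fun hle => hp (hG u (hle.trans (ncard_neighborSet_orig_inter_le hp)))
  all_goals refine not_le_of_gt ?_
  · refine (ncard_neighborSet_inter_lt_of_gadHead nofun (by simp) hp (D := fun v => .vx v a) ?_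
      hv).trans_le hn
    rintro (_ | _ | _ | _ | _ | _) ⟨⟩
    exact ⟨_, rfl⟩
  · refine (ncard_neighborSet_inter_lt_of_gadHead nofun (by simp) hp (D := fun v => .vy v a) ?_
      hv).trans_le hn
    rintro (_ | _ | _ | _ | _ | _) ⟨⟩
    exact ⟨_, rfl⟩
  · refine (ncard_neighborSet_inter_lt_of_gadHead nofun (by simp) hp (D := fun i => .xa i u a) ?_
      hi).trans_eq (Nat.card_fin ℓ)
    rintro (_ | _ | _ | _ | _ | _) ⟨⟩
    exact ⟨_, rfl⟩
  · refine (ncard_neighborSet_inter_lt_of_gadHead nofun (by simp) hp (D := fun i => .yb i u a) ?_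
      hj).trans_eq (Nat.card_fin ℓ)
    rintro (_ | _ | _ | _ | _ | _) ⟨⟩
    exact ⟨_, rfl⟩
  · exact ncard_neighborSet_gad_inter_lt hp

variable {S A B : Set (HVert V ℓ d)}

theorem IsTargetSet.origShadow (hS : IsTargetSet (graphH G ℓ d) (tauH τ n ℓ d) S)
    (hn : Nat.card V ≤ n) (hX : xShadow S ≠ Set.univ) (hY : yShadow S ≠ Set.univ) :
    IsTargetSet G τ (origShadow S) := by
  obtain ⟨i, hi⟩ := (Set.ne_univ_iff_exists_notMem _).1 hX
  obtain ⟨j, hj⟩ := (Set.ne_univ_iff_exists_notMem _).1 hY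
  refine isTargetSet_iff.2 fun W hSW hW => Set.eq_univ_of_forall fun v => by_contra fun hv => ?_
  set K : Set (V ⊕ Fin ℓ ⊕ Fin ℓ) := owner '' S ∪ Sum.inl '' W
  have hKV : Sum.inl ⁻¹' K = W := by
    rw [Set.preimage_union, Set.preimage_image_eq _ Sum.inl_injective]
    exact Set.union_eq_right.2 hSW
  have hvK : .inl v ∉ K := by rwa [← hKV] at hv
  have hclosed : ActivationClosed (graphH G ℓ d) (tauH τ n ℓ d) (owner ⁻¹' K) :=
    activationClosed_preimage_owner hn (hKV ▸ hW) hvK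
      (i := i) (by rintro (h | ⟨_, _, h⟩); exacts [hi h, nomatch h])
      (j := j) (by rintro (h | ⟨_, _, h⟩); exacts [hj h, nomatch h])
  have hSK : S ⊆ owner ⁻¹' K := Set.image_subset_iff.1 Set.subset_union_left
  exact hvK (Set.eq_univ_iff_forall.1 (isTargetSet_iff.1 hS _ hSK hclosed) (.orig v))

theorem ncard_preimage_inl_add_ncard_preimage_inr {α β : Type*} [Finite α] [Finite β]
    (s : Set (α ⊕ β)) : (Sum.inl ⁻¹' s).ncard + (Sum.inr ⁻¹' s).ncard = s.ncard := by
  conv_rhs => rw [← Set.image_preimage_inl_union_image_preimage_inr s]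
  rw [Set.ncard_union_eq Set.disjoint_image_inl_image_inr,
    Set.ncard_image_of_injective _ Sum.inl_injective,
    Set.ncard_image_of_injective _ Sum.inr_injective]

theorem ncard_shadows_le (S : Set (HVert V ℓ d)) :
    (origShadow S).ncard + ((xShadow S).ncard + (yShadow S).ncard) ≤ S.ncard := by
  calc _ = (Sum.inl ⁻¹' (owner '' S)).ncard + (Sum.inr ⁻¹' (owner '' S)).ncard :=
        congrArg _ (ncard_preimage_inl_add_ncard_preimage_inr (Sum.inr ⁻¹' (owner '' S)))
    _ = (owner '' S).ncard := ncard_preimage_inl_add_ncard_preimage_inr _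
    _ ≤ S.ncard := Set.ncard_image_le

theorem add_min_le_ncard_of_symmDiff (hn : Nat.card V ≤ n)
    (hB : IsTargetSet (graphH G ℓ d) (tauH τ n ℓ d) B) (hAB : (symmDiff A B).ncard = 1)
    (hAX : xShadow A = Set.univ) (hBX : xShadow B ≠ Set.univ) :
    ℓ + min ℓ (optTS G τ) ≤ A.ncard := by
  have hBA : B ⊆ A := (subset_or_superset_of_ncard_symmDiff_eq_one hAB).resolve_left fun h =>
    hBX (Set.univ_subset_iff.1 (hAX ▸ xShadow_mono h))
  have hcard := ncard_shadows_le A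
  rw [hAX, Set.ncard_univ, Nat.card_fin] at hcard
  by_cases hAY : yShadow A = Set.univ
  · rw [hAY, Set.ncard_univ, Nat.card_fin] at hcard
    omega
  · have hBY : yShadow B ≠ Set.univ := fun h =>
      hAY (Set.univ_subset_iff.1 (h ▸ yShadow_mono hBA))
    have hopt : optTS G τ ≤ (origShadow A).ncard :=
      (hB.origShadow hn hBX hBY).optTS_le_ncard.trans (Set.ncard_le_ncard (origShadow_mono hBA))
    omega

theorem le_optReconf_graphH (hn : n = Nat.card V) (hτ : ∀ v, τ v ≤ d v) :
    ℓ + min ℓ (optTS G τ) ≤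
      optReconf (graphH G ℓ d) (tauH τ n ℓ d) (XSet V ℓ d) (YSet V ℓ d) := by
  obtain rfl | hℓ := ℓ.eq_zero_or_pos
  · simp
  have : Nonempty (Fin ℓ) := ⟨⟨0, hℓ⟩⟩
  have hreach := ((optReconf_le_iff (isTargetSet_XSet (G := G) (ℓ := ℓ) hn.le hτ)
    (isTargetSet_YSet hn.le hτ)).1 le_rfl).2
  obtain ⟨A, B, hstep, hA, hB⟩ := exists_step_of_reflTransGen
    (P := fun S => xShadow S = Set.univ) hreach xShadow_XSet
    (by simp [xShadow_YSet, Set.empty_ne_univ])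
  exact (add_min_le_ncard_of_symmDiff hn.ge hstep.right_target hstep.ncard_symmDiff hA hB).trans
    hstep.left_ncard_le

end LowerBound

end Construction

end TSS

open TSS in
theorem stmt14_general {V : Type*} [Finite V] (G : SimpleGraph V) (τ d : V → ℕ) (ℓ : ℕ)
    (hτ : ∀ v, τ v ≤ d v) :
    optReconf (graphH G ℓ d) (tauH τ (Nat.card V) ℓ d) (XSet V ℓ d) (YSet V ℓ d) =
      ℓ + min ℓ (optTS G τ) :=
  (optReconf_graphH_le le_rfl hτ).antisymm (le_optReconf_graphH rfl hτ)

open TSS in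
/-- The gap-preserving reduction: for `ℓ > k_s ≥ k_c`, completeness (`opt(G) ≤ k_c` implies
`opt_H(X ⇝ Y) ≤ k_c + ℓ`) and soundness (`opt(G) > k_s` implies `opt_H(X ⇝ Y) > k_s + ℓ`). -/
theorem stmt14 {V : Type*} [Fintype V] (G : SimpleGraph V) [DecidableRel G.Adj] (τ : V → ℕ)
    (kc ks ℓ : ℕ) (hks : kc ≤ ks) (hℓ : ks < ℓ)
    (hiso : ∀ v : V, 0 < G.degree v) (hτ : ∀ v : V, τ v ≤ G.degree v) :
    (optTS G τ ≤ kc →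
      optReconf (graphH G ℓ (fun v => G.degree v)) (tauH τ (Fintype.card V) ℓ (fun v => G.degree v))
        (XSet V ℓ (fun v => G.degree v)) (YSet V ℓ (fun v => G.degree v)) ≤ kc + ℓ) ∧
    (ks < optTS G τ →
      ks + ℓ < optReconf (graphH G ℓ (fun v => G.degree v)) (tauH τ (Fintype.card V) ℓ (fun v => G.degree v))
        (XSet V ℓ (fun v => G.degree v)) (YSet V ℓ (fun v => G.degree v))) := by
  rw [← Nat.card_eq_fintype_card, stmt14_general G τ _ ℓ hτ]
  omega
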